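/- The zeta-regularized determinant of |Ã| equals 2: writing ζ_{|Ã|}(s) = 2·ζ(s, 1/2) for the analytic continuation of the spectral zeta function, one has ζ'_{|Ã|}(0) = −log 2 and hence det_ζ(|Ã|) := exp(−ζ'_{|Ã|}(0)) = 2. -/

import Mathlib

theorem hurwitz_half_of_one_lt_re {s : ℂ} (hs : 1 < s.re) :
    HurwitzZeta.hurwitzZeta ((1 / 2 : ℝ) : UnitAddCircle) s =
      ((2 : ℂ) ^ s - 1) * riemannZeta s := by
  have h1 := HurwitzZeta.hasSum_hurwitzZeta_of_one_lt_re (a := 1 / 2) (by norm_num) hs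
  have h0 := HurwitzZeta.hasSum_hurwitzZeta_of_one_lt_re (a := 0) (by norm_num) hs
  have hz : HurwitzZeta.hurwitzZeta ((0 : ℝ) : UnitAddCircle) s = riemannZeta s := by
    rw [← HurwitzZeta.hurwitzZeta_zero]; simp
  rw [hz] at h0
  have h2 : (2 : ℂ) ^ s ≠ 0 := by simp [Complex.cpow_eq_zero_iff]
  have key : ∀ x : ℝ, 0 ≤ x → (((2 * x : ℝ)) : ℂ) ^ s = (2 : ℂ) ^ s * (x : ℂ) ^ s := by
    intro x hx
    have := Complex.mul_cpow_ofReal_nonneg (a := 2) (b := x) (by norm_num) hx s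
    rw [Complex.ofReal_mul, this]; simp
  have he : HasSum (fun k : ℕ => 1 / (((2 * k : ℕ) : ℂ) + ((0 : ℝ) : ℂ)) ^ s)
      (((2 : ℂ) ^ s)⁻¹ * riemannZeta s) := by
    have hm := h0.mul_left (((2 : ℂ) ^ s)⁻¹)
    refine (congrArg (fun f : ℕ → ℂ => HasSum f _) (funext fun k => ?_)).mpr hm
    have := key k (by positivity)
    push_cast at this ⊢
    rw [add_zero, add_zero, this]
    field_simp
  have ho : HasSum (fun k : ℕ => 1 / (((2 * k + 1 : ℕ) : ℂ) + ((0 : ℝ) : ℂ)) ^ s)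
      (((2 : ℂ) ^ s)⁻¹ * HurwitzZeta.hurwitzZeta ((1 / 2 : ℝ) : UnitAddCircle) s) := by
    have hm := h1.mul_left (((2 : ℂ) ^ s)⁻¹)
    refine (congrArg (fun f : ℕ → ℂ => HasSum f _) (funext fun k => ?_)).mpr hm
    have := key (k + 1 / 2) (by positivity)
    push_cast at this ⊢
    rw [add_zero, show (2 * (k : ℂ) + 1) = 2 * (k + 1 / 2) by ring, this]
    field_simp
  have hsum := (HasSum.even_add_odd
    (f := fun k : ℕ => 1 / ((k : ℂ) + ((0 : ℝ) : ℂ)) ^ s) he ho).unique h0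
  field_simp at hsum
  linear_combination hsum

theorem hurwitz_half_eq {s : ℂ} (hs : s ≠ 1) :
    HurwitzZeta.hurwitzZeta ((1 / 2 : ℝ) : UnitAddCircle) s =
      ((2 : ℂ) ^ s - 1) * riemannZeta s := by
  have hU : IsOpen ({1}ᶜ : Set ℂ) := isOpen_compl_singleton
  have hf : AnalyticOnNhd ℂ (HurwitzZeta.hurwitzZeta ((1 / 2 : ℝ) : UnitAddCircle)) {1}ᶜ :=
    DifferentiableOn.analyticOnNhd (fun z hz =>
      (HurwitzZeta.differentiableAt_hurwitzZeta _ hz).differentiableWithinAt) hU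
  have hg : AnalyticOnNhd ℂ (fun s : ℂ => ((2 : ℂ) ^ s - 1) * riemannZeta s) {1}ᶜ :=
    DifferentiableOn.analyticOnNhd (fun z hz =>
      ((((differentiableAt_id).const_cpow (Or.inl two_ne_zero)).sub_const 1).mul
        (differentiableAt_riemannZeta hz)).differentiableWithinAt) hU
  have hc : IsPreconnected ({1}ᶜ : Set ℂ) :=
    (isConnected_compl_singleton_of_one_lt_rank (by simp) _).isPreconnected
  refine hf.eqOn_of_preconnected_of_eventuallyEq hg hc (z₀ := 2) (by simp) ?_ hs
  have : {z : ℂ | 1 < z.re} ∈ nhds (2 : ℂ) :=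
    (isOpen_lt continuous_const Complex.continuous_re).mem_nhds (by simp)
  filter_upwards [this] with z hz using hurwitz_half_of_one_lt_re hz

/-- The zeta-regularized determinant of `|Ã|` equals `2`: for the
spectral zeta function `ζ_{|Ã|}(s) = 2ζ(s,1/2)` (analytically continued), one has
`ζ'_{|Ã|}(0) = −log 2`, hence `det_ζ(|Ã|) = exp(−ζ'_{|Ã|}(0)) = 2`. -/
theorem zeta_determinant_eq_two :
    deriv (fun s : ℂ => 2 * HurwitzZeta.hurwitzZeta ((1 / 2 : ℝ) : UnitAddCircle) s) 0 =
        -(Real.log 2 : ℂ) ∧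
    Complex.exp
        (-(deriv (fun s : ℂ =>
            2 * HurwitzZeta.hurwitzZeta ((1 / 2 : ℝ) : UnitAddCircle) s) 0)) = 2 := by
  have h : deriv (fun s : ℂ => 2 * HurwitzZeta.hurwitzZeta ((1 / 2 : ℝ) : UnitAddCircle) s) 0 =
        -(Real.log 2 : ℂ) := by
    have hev : (fun s : ℂ => 2 * HurwitzZeta.hurwitzZeta ((1 / 2 : ℝ) : UnitAddCircle) s)
        =ᶠ[nhds 0] fun s => 2 * (((2 : ℂ) ^ s - 1) * riemannZeta s) := by
      filter_upwards [isOpen_compl_singleton.mem_nhds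
        (show (0 : ℂ) ∈ ({1}ᶜ : Set ℂ) by simp)] with z hz
      rw [hurwitz_half_eq hz]
    rw [hev.deriv_eq]
    have hd := ((((hasDerivAt_id (0 : ℂ)).const_cpow (c := 2) (Or.inl two_ne_zero)).sub_const 1).mul
      (differentiableAt_riemannZeta (s := 0) (by simp)).hasDerivAt).const_mul (2 : ℂ)
    refine hd.deriv.trans ?_
    simp [riemannZeta_zero]
    ring
  refine ⟨h, ?_⟩
  rw [h, neg_neg, ← Complex.ofReal_exp, Real.exp_log (by norm_num)]
  norm_num
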